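/- Let d ≥ 1, let t > 1, and let ν₀, ν̃₀, ν₁ ∈ P₂(ℝ^d). If ρ is a metric extrapolation of (ν₀, ν₁) at time t and ρ̃ is a metric extrapolation of (ν̃₀, ν₁) at time t, then W₂²(ρ, ρ̃) ≤ t(t−1)·(W₂(ν₁,ν₀) + W₂(ν₁,ν̃₀))·W₂(ν₀, ν̃₀). -/

import Mathlib

/-!
The extrapolation functional `F ρ = W₂²(ρ, ν₁) / (2(t-1)) - W₂²(ρ, ν₀) / (2t)` is strongly convex
along generalized geodesics based at `ν₁`, with modulus `1/(t-1) - 1/t = 1/(t(t-1))`. To see this,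
glue couplings of `(ρ, ν₁)` and `(ν₁, σ)` along `ν₁`, which gives random variables `X`, `Z`, `Y`
with laws `ρ`, `ν₁`, `σ`, and let `η` be the law of `(1-s) X + s Y`. The identity
`‖(1-s)x + sy - z‖² = (1-s)‖x-z‖² + s‖y-z‖² - s(1-s)‖x-y‖²` bounds `W₂²(η, ν₁)` from above, and,
after gluing a coupling of `(η, ν₀)` along `η`, bounds `W₂²(η, ν₀)` from below
(`exists_interpolation`). Nearly optimal couplings suffice, so the existence of optimal
ones is never needed.

A minimizer `ρ` of `F` therefore has quadratic growth,
`W₂²(ρ, σ) / (2t(t-1)) ≤ F σ - F ρ` (`IsMetricExtrap.growth`).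
Taking `σ = ν₁` and using the triangle inequality gives `W₂(ρ, ν₁) ≤ (t-1) W₂(ν₁, ν₀)`
(`IsMetricExtrap.W2_le`).
Adding the growth inequalities for `ρ` (tested at `ρ'`) and for `ρ'` (tested at `ρ`) cancels the
terms in `ν₁` and leaves
`W₂²(ρ, ρ') ≤ (t-1)/2 * (W₂²(ρ', ν₀') - W₂²(ρ', ν₀) + W₂²(ρ, ν₀) - W₂²(ρ, ν₀'))`.
Each difference of squares is at most `W₂(ν₀, ν₀')` times the sum of the two distances, and
the four distances add up to at most `2t (W₂(ν₁, ν₀) + W₂(ν₁, ν₀'))`.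
-/


open MeasureTheory

noncomputable section

variable {V : Type*} [NormedAddCommGroup V] [NormedSpace ℝ V]
  [MeasurableSpace V] [BorelSpace V]

/-- `π` is a coupling of `μ` and `ν`. -/
def IsCoupling (π : Measure (V × V)) (μ ν : Measure V) : Prop :=
  IsProbabilityMeasure π ∧ π.map Prod.fst = μ ∧ π.map Prod.snd = ν

/-- Squared 2-Wasserstein distance, as infimum of quadratic cost over couplings. -/
def W2sq (μ ν : Measure V) : ℝ :=
  sInf {c : ℝ | ∃ π : Measure (V × V), IsCoupling π μ ν ∧ c = ∫ p, ‖p.1 - p.2‖ ^ 2 ∂π}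

/-- The 2-Wasserstein distance. -/
def W2 (μ ν : Measure V) : ℝ := Real.sqrt (W2sq μ ν)

/-- `μ` is a Borel probability measure with finite second moment. -/
def IsP2 (μ : Measure V) : Prop :=
  IsProbabilityMeasure μ ∧ Integrable (fun x => ‖x‖ ^ 2) μ

/-- Convex order: `∫ φ dμ ≤ ∫ φ dν` for every convex `φ` for which both integrals exist. -/
def ConvexOrder (μ ν : Measure V) : Prop :=
  ∀ φ : V → ℝ, ConvexOn ℝ Set.univ φ → Integrable φ μ → Integrable φ ν →
    ∫ x, φ x ∂μ ≤ ∫ x, φ x ∂ν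

/-- `X` is a Borel map, square-integrable w.r.t. `ρ₀`. -/
def MemL2 (ρ₀ : Measure V) (X : V → V) : Prop :=
  Measurable X ∧ Integrable (fun x => ‖X x‖ ^ 2) ρ₀

/-- `μs` is a backward projection of `μ` onto the convex order cone below `ν`. -/
def IsBackwardProj (ν μ μs : Measure V) : Prop :=
  IsP2 μs ∧ ConvexOrder μs ν ∧
    ∀ ρ : Measure V, IsP2 ρ → ConvexOrder ρ ν → W2 μs μ ≤ W2 ρ μ

/-- `ρs` is a forward projection of `ν` above `μ`. -/
def IsForwardProj (μ ν ρs : Measure V) : Prop :=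
  IsP2 ρs ∧ ConvexOrder μ ρs ∧
    ∀ ρ : Measure V, IsP2 ρ → ConvexOrder μ ρ → W2 ρs ν ≤ W2 ρ ν

/-- `ρs` is a metric extrapolation of `(ν₀, ν₁)` at time `t`. -/
def IsMetricExtrap (t : ℝ) (ν₀ ν₁ ρs : Measure V) : Prop :=
  IsP2 ρs ∧ ∀ ρ : Measure V, IsP2 ρ →
    W2sq ρs ν₁ / (2 * (t - 1)) - W2sq ρs ν₀ / (2 * t) ≤
      W2sq ρ ν₁ / (2 * (t - 1)) - W2sq ρ ν₀ / (2 * t)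

/-- Constant-speed minimizing geodesic on `[a,b]` for `W₂`. -/
def IsGeodesic (a b : ℝ) (γ : ℝ → Measure V) : Prop :=
  (∀ s ∈ Set.Icc a b, IsP2 (γ s)) ∧
    ∀ s₁ ∈ Set.Icc a b, ∀ s₂ ∈ Set.Icc a b,
      W2 (γ s₁) (γ s₂) = |s₁ - s₂| / (b - a) * W2 (γ a) (γ b)

/-- Topological support of a measure. -/
def msupport (μ : Measure V) : Set V := {x | ∀ U ∈ nhds x, μ U ≠ 0}

/-- Regular measures: absolutely continuous, compact convex support,
density bounded above and below on the support. -/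
def IsP2reg {d : ℕ} (μ : Measure (EuclideanSpace ℝ (Fin d))) : Prop :=
  IsP2 μ ∧ μ ≪ volume ∧ IsCompact (msupport μ) ∧ Convex ℝ (msupport μ) ∧
    ∃ m M : ℝ, 0 < m ∧ 0 < M ∧
      ∀ᵐ x ∂(volume : Measure (EuclideanSpace ℝ (Fin d))),
        x ∈ msupport μ → m ≤ (μ.rnDeriv volume x).toReal ∧ (μ.rnDeriv volume x).toReal ≤ M


section Helpers

variable {d : ℕ} {Ω : Type*} [MeasurableSpace Ω]

/-- Any pair of random variables with laws `μ` and `ν` bounds `W2sq μ ν` from above. -/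
lemma W2sq_le_integral {μ ν : Measure (EuclideanSpace ℝ (Fin d))} (P : Measure Ω)
    [IsProbabilityMeasure P] {X Y : Ω → EuclideanSpace ℝ (Fin d)} (hX : Measurable X)
    (hY : Measurable Y) (hXμ : P.map X = μ) (hYν : P.map Y = ν) :
    W2sq μ ν ≤ ∫ ω, ‖X ω - Y ω‖ ^ 2 ∂P := by
  refine csInf_le ⟨0, ?_⟩ ⟨P.map (fun ω => (X ω, Y ω)), ⟨?_, ?_, ?_⟩, ?_⟩
  · rintro _ ⟨π, -, rfl⟩
    exact integral_nonneg fun _ => by positivity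
  · exact Measure.isProbabilityMeasure_map (by fun_prop)
  · rw [Measure.map_map measurable_fst (by fun_prop)]; exact hXμ
  · rw [Measure.map_map measurable_snd (by fun_prop)]; exact hYν
  · rw [integral_map (by fun_prop) (by fun_prop)]

lemma exists_coupling_lt {μ ν : Measure (EuclideanSpace ℝ (Fin d))} (hμ : IsP2 μ) (hν : IsP2 ν)
    {ε : ℝ} (hε : 0 < ε) :
    ∃ π, IsCoupling π μ ν ∧ ∫ p, ‖p.1 - p.2‖ ^ 2 ∂π < W2sq μ ν + ε := by
  have := hμ.1
  have := hν.1
  have hne : {c : ℝ | ∃ π : Measure (EuclideanSpace ℝ (Fin d) × EuclideanSpace ℝ (Fin d)),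
      IsCoupling π μ ν ∧ c = ∫ p, ‖p.1 - p.2‖ ^ 2 ∂π}.Nonempty :=
    ⟨_, μ.prod ν, ⟨inferInstance, by simp [Measure.map_fst_prod], by simp [Measure.map_snd_prod]⟩, rfl⟩
  obtain ⟨_, ⟨π, hπ, rfl⟩, h⟩ := Real.lt_sInf_add_pos hne hε
  exact ⟨π, hπ, h⟩

lemma W2sq_nonneg (μ ν : Measure (EuclideanSpace ℝ (Fin d))) : 0 ≤ W2sq μ ν := by
  refine Real.sInf_nonneg ?_
  rintro _ ⟨π, -, rfl⟩
  exact integral_nonneg fun _ => by positivity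

lemma W2_sq (μ ν : Measure (EuclideanSpace ℝ (Fin d))) : W2 μ ν ^ 2 = W2sq μ ν :=
  Real.sq_sqrt (W2sq_nonneg μ ν)

lemma W2_nonneg (μ ν : Measure (EuclideanSpace ℝ (Fin d))) : 0 ≤ W2 μ ν := Real.sqrt_nonneg _

lemma W2sq_self {μ : Measure (EuclideanSpace ℝ (Fin d))} (hμ : IsP2 μ) : W2sq μ μ = 0 := by
  have := hμ.1
  refine le_antisymm ?_ (W2sq_nonneg _ _)
  simpa using W2sq_le_integral μ measurable_id measurable_id Measure.map_id Measure.map_id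

lemma W2sq_comm_le {μ ν : Measure (EuclideanSpace ℝ (Fin d))} (hμ : IsP2 μ) (hν : IsP2 ν) :
    W2sq μ ν ≤ W2sq ν μ := by
  refine le_of_forall_pos_le_add fun ε hε => ?_
  obtain ⟨π, ⟨hp, h1, h2⟩, h⟩ := exists_coupling_lt hν hμ hε
  refine le_trans (W2sq_le_integral π measurable_snd measurable_fst h2 h1) (le_trans (le_of_eq ?_) h.le)
  simp_rw [norm_sub_rev]

lemma W2_comm {μ ν : Measure (EuclideanSpace ℝ (Fin d))} (hμ : IsP2 μ) (hν : IsP2 ν) :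
    W2 μ ν = W2 ν μ := by
  rw [W2, W2, le_antisymm (W2sq_comm_le hμ hν) (W2sq_comm_le hν hμ)]

/-- Gluing lemma: a random variable `f` on `(Ω, P)` with law `μ` and a coupling `σ` of `μ` and `ν`
can be realised on a common extension `Ω × ℝ^d` of `Ω`. The extension is built by sampling the second
coordinate from the disintegration of `σ` at `f ω`. -/
lemma exists_glue {μ ν : Measure (EuclideanSpace ℝ (Fin d))} (P : Measure Ω)
    [IsProbabilityMeasure P] {f : Ω → EuclideanSpace ℝ (Fin d)} (hf : Measurable f)
    (hfμ : P.map f = μ) {σ : Measure (EuclideanSpace ℝ (Fin d) × EuclideanSpace ℝ (Fin d))}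
    (hσ : IsCoupling σ μ ν) :
    ∃ τ : Measure (Ω × EuclideanSpace ℝ (Fin d)), IsProbabilityMeasure τ ∧
      τ.map Prod.fst = P ∧ τ.map (fun q => (f q.1, q.2)) = σ := by
  obtain ⟨hp, h1, h2⟩ := hσ
  refine ⟨P.compProd (σ.condKernel.comap f hf), inferInstance, Measure.fst_compProd _ _, ?_⟩
  have hm : Measurable fun q : Ω × EuclideanSpace ℝ (Fin d) => (f q.1, q.2) := by fun_prop
  have hσ' : (P.map f).compProd σ.condKernel = σ := by
    rw [hfμ, ← h1]; exact σ.disintegrate σ.condKernel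
  have hPf : IsProbabilityMeasure (P.map f) := Measure.isProbabilityMeasure_map hf.aemeasurable
  conv_rhs => rw [← hσ']
  ext s hs
  rw [Measure.map_apply hm hs, Measure.compProd_apply (hm hs), Measure.compProd_apply hs,
    lintegral_map (ProbabilityTheory.Kernel.measurable_kernel_prodMk_left hs) hf]
  rfl

lemma IsP2.integrable_sq {μ : Measure (EuclideanSpace ℝ (Fin d))} (hμ : IsP2 μ) {P : Measure Ω}
    {X : Ω → EuclideanSpace ℝ (Fin d)} (hX : Measurable X) (h : P.map X = μ) :
    Integrable (fun ω => ‖X ω‖ ^ 2) P := by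
  have := hμ.2
  rw [← h] at this
  exact (integrable_map_measure (by fun_prop) (by fun_prop)).1 this

lemma integrable_sub_sq {P : Measure Ω} {X Y : Ω → EuclideanSpace ℝ (Fin d)} (hX : Measurable X)
    (hY : Measurable Y) (iX : Integrable (fun ω => ‖X ω‖ ^ 2) P)
    (iY : Integrable (fun ω => ‖Y ω‖ ^ 2) P) : Integrable (fun ω => ‖X ω - Y ω‖ ^ 2) P := by
  refine ((iX.const_mul 2).add (iY.const_mul 2)).mono' (by fun_prop) (ae_of_all _ fun ω => ?_)
  rw [Real.norm_of_nonneg (by positivity)]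
  simp only [Pi.add_apply]
  nlinarith [norm_sub_le (X ω) (Y ω), norm_nonneg (X ω - Y ω), sq_nonneg (‖X ω‖ - ‖Y ω‖)]

lemma norm_interp_sq (s : ℝ) (x y z : EuclideanSpace ℝ (Fin d)) :
    ‖(1 - s) • x + s • y - z‖ ^ 2 =
      (1 - s) * ‖x - z‖ ^ 2 + s * ‖y - z‖ ^ 2 - s * (1 - s) * ‖x - y‖ ^ 2 := by
  have e1 : (1 - s) • x + s • y - z = (1 - s) • (x - z) + s • (y - z) := by module
  have e2 : x - y = (x - z) - (y - z) := by abel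
  rw [e1, e2, norm_add_sq_real, norm_sub_sq_real (x - z) (y - z), norm_smul, norm_smul, inner_smul_left,
    inner_smul_right, mul_pow, mul_pow, Real.norm_eq_abs, Real.norm_eq_abs, sq_abs, sq_abs]
  simp only [conj_trivial]
  ring

/-- Integrated form of `norm_interp_sq`. -/
lemma integral_interp_sq (s : ℝ) {P : Measure Ω} {X Y Z : Ω → EuclideanSpace ℝ (Fin d)}
    (hX : Measurable X) (hY : Measurable Y) (hZ : Measurable Z)
    (iX : Integrable (fun ω => ‖X ω‖ ^ 2) P) (iY : Integrable (fun ω => ‖Y ω‖ ^ 2) P)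
    (iZ : Integrable (fun ω => ‖Z ω‖ ^ 2) P) :
    Integrable (fun ω => ‖(1 - s) • X ω + s • Y ω - Z ω‖ ^ 2) P ∧
    ∫ ω, ‖(1 - s) • X ω + s • Y ω - Z ω‖ ^ 2 ∂P = (1 - s) * ∫ ω, ‖X ω - Z ω‖ ^ 2 ∂P
      + s * ∫ ω, ‖Y ω - Z ω‖ ^ 2 ∂P - s * (1 - s) * ∫ ω, ‖X ω - Y ω‖ ^ 2 ∂P := by
  have a := (integrable_sub_sq hX hZ iX iZ).const_mul (1 - s)
  have b := (integrable_sub_sq hY hZ iY iZ).const_mul s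
  have c := (integrable_sub_sq hX hY iX iY).const_mul (s * (1 - s))
  simp_rw [norm_interp_sq]
  refine ⟨(a.add b).sub c, ?_⟩
  rw [integral_sub (by exact a.add b) c, integral_add a b, integral_const_mul, integral_const_mul,
    integral_const_mul]

/-- Existence of generalized geodesics based at `ν₁`: `η` plays the role of the point at time `s`
between `ρ` and `σ`, and `C` is the cost of the coupling of `ρ` and `σ` induced by gluing nearly
optimal couplings along `ν₁`. The upper bound for `W2sq η ν₁` is specific to `ν₁`, the lower bound
holds for every `ν₀`. -/
lemma exists_interpolation {ρ σ ν₁ : Measure (EuclideanSpace ℝ (Fin d))} (hρ : IsP2 ρ)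
    (hσ : IsP2 σ) (hν₁ : IsP2 ν₁) {s : ℝ} (hs0 : 0 ≤ s) (hs1 : s ≤ 1) {ε : ℝ} (hε : 0 < ε) :
    ∃ (C : ℝ) (η : Measure (EuclideanSpace ℝ (Fin d))), W2sq ρ σ ≤ C ∧ IsP2 η ∧
      W2sq η ν₁ ≤ (1 - s) * W2sq ρ ν₁ + s * W2sq σ ν₁ + ε - s * (1 - s) * C ∧
      ∀ ν₀, IsP2 ν₀ →
        (1 - s) * W2sq ρ ν₀ + s * W2sq σ ν₀ - s * (1 - s) * C ≤ W2sq η ν₀ := by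
  obtain ⟨π, hπ, hπlt⟩ := exists_coupling_lt hρ hν₁ hε
  obtain ⟨π', hπ', hπlt'⟩ := exists_coupling_lt hν₁ hσ hε
  have := hπ.1
  obtain ⟨τ, hτ, hτ1, hτ2⟩ := exists_glue π measurable_snd hπ.2.2 hπ'
  let X := fun q : (EuclideanSpace ℝ (Fin d) × EuclideanSpace ℝ (Fin d)) ×
    EuclideanSpace ℝ (Fin d) => q.1.1
  let Z := fun q : (EuclideanSpace ℝ (Fin d) × EuclideanSpace ℝ (Fin d)) ×
    EuclideanSpace ℝ (Fin d) => q.1.2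
  let Y := fun q : (EuclideanSpace ℝ (Fin d) × EuclideanSpace ℝ (Fin d)) ×
    EuclideanSpace ℝ (Fin d) => q.2
  let I := fun q => (1 - s) • X q + s • Y q
  have mX : Measurable X := by fun_prop
  have mY : Measurable Y := by fun_prop
  have mZ : Measurable Z := by fun_prop
  have mI : Measurable I := by fun_prop
  have lX : τ.map X = ρ := by
    rw [← hπ.2.1, ← hτ1, Measure.map_map measurable_fst measurable_fst]; rfl
  have lZ : τ.map Z = ν₁ := by
    rw [← hπ.2.2, ← hτ1, Measure.map_map measurable_snd measurable_fst]; rfl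
  have lY : τ.map Y = σ := by
    rw [← hπ'.2.2, ← hτ2, Measure.map_map measurable_snd (by fun_prop)]; rfl
  have iX := hρ.integrable_sq mX lX
  have iY := hσ.integrable_sq mY lY
  have iZ := hν₁.integrable_sq mZ lZ
  have cXZ : ∫ q, ‖X q - Z q‖ ^ 2 ∂τ < W2sq ρ ν₁ + ε := by
    rw [← hτ1, integral_map (by fun_prop) (by fun_prop)] at hπlt
    exact hπlt
  have cYZ : ∫ q, ‖Y q - Z q‖ ^ 2 ∂τ < W2sq σ ν₁ + ε := by
    rw [← hτ2, integral_map (by fun_prop) (by fun_prop)] at hπlt'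
    have := W2sq_comm_le hν₁ hσ
    have e : ∫ q, ‖Y q - Z q‖ ^ 2 ∂τ = ∫ q, ‖Z q - Y q‖ ^ 2 ∂τ := by simp_rw [norm_sub_rev]
    rw [e]
    exact hπlt'.trans_le (by linarith)
  have iI : Integrable (fun q => ‖I q‖ ^ 2) τ := by
    have := (integral_interp_sq s mX mY (measurable_const (a := 0)) iX iY (by simp)).1
    simpa using this
  refine ⟨∫ q, ‖X q - Y q‖ ^ 2 ∂τ, τ.map I, W2sq_le_integral τ mX mY lX lY,
    ⟨Measure.isProbabilityMeasure_map mI.aemeasurable,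
      (integrable_map_measure (by fun_prop) (by fun_prop)).2 iI⟩, ?_, ?_⟩
  · have h := W2sq_le_integral τ mI mZ rfl lZ
    rw [(integral_interp_sq s mX mY mZ iX iY iZ).2] at h
    nlinarith
  · intro ν₀ hν₀
    have hη : IsP2 (τ.map I) := ⟨Measure.isProbabilityMeasure_map mI.aemeasurable,
      (integrable_map_measure (by fun_prop) (by fun_prop)).2 iI⟩
    refine le_of_forall_pos_le_add fun δ hδ => ?_
    obtain ⟨κ, hκ, hκlt⟩ := exists_coupling_lt hη hν₀ hδ
    obtain ⟨θ, hθ, hθ1, hθ2⟩ := exists_glue τ mI rfl hκ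
    rw [← hθ2, integral_map (by fun_prop) (by fun_prop)] at hκlt
    have mX' : Measurable fun q : _ × EuclideanSpace ℝ (Fin d) => X q.1 := mX.comp measurable_fst
    have mY' : Measurable fun q : _ × EuclideanSpace ℝ (Fin d) => Y q.1 := mY.comp measurable_fst
    have lX' : θ.map (fun q => X q.1) = ρ := by
      rw [← lX, ← hθ1, Measure.map_map mX measurable_fst]; rfl
    have lY' : θ.map (fun q => Y q.1) = σ := by
      rw [← lY, ← hθ1, Measure.map_map mY measurable_fst]; rfl
    have lW : θ.map Prod.snd = ν₀ := by
      rw [← hκ.2.2, ← hθ2, Measure.map_map measurable_snd (by fun_prop)]; rfl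
    have e := (integral_interp_sq s mX' mY' measurable_snd (hρ.integrable_sq mX' lX')
      (hσ.integrable_sq mY' lY') (hν₀.integrable_sq measurable_snd lW)).2
    have b1 := W2sq_le_integral θ mX' measurable_snd lX' lW
    have b2 := W2sq_le_integral θ mY' measurable_snd lY' lW
    have e2 : ∫ q, ‖X q - Y q‖ ^ 2 ∂τ = ∫ q, ‖X q.1 - Y q.1‖ ^ 2 ∂θ := by
      rw [← hθ1, integral_map (by fun_prop) (by fun_prop)]
    rw [e2]
    have := mul_le_mul_of_nonneg_left b1 (sub_nonneg.2 hs1)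
    have := mul_le_mul_of_nonneg_left b2 hs0
    change ∫ q, ‖(1 - s) • X q.1 + s • Y q.1 - q.2‖ ^ 2 ∂θ < _ at hκlt
    linarith

lemma W2_triangle {μ ν ξ : Measure (EuclideanSpace ℝ (Fin d))} (hμ : IsP2 μ) (hν : IsP2 ν)
    (hξ : IsP2 ξ) : W2 μ ξ ≤ W2 μ ν + W2 ν ξ := by
  refine le_of_forall_pos_le_add fun δ hδ => ?_
  -- Couplings of cost below `a²` and `b²`, where `a`, `b` exceed the two distances by `δ / 2`.
  set a := W2 μ ν + δ / 2 with ha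
  set b := W2 ν ξ + δ / 2 with hb
  have a0 := W2_nonneg μ ν
  have b0 := W2_nonneg ν ξ
  have ha0 : 0 < a := by positivity
  have hb0 : 0 < b := by positivity
  obtain ⟨π, hπ, hπlt⟩ := exists_coupling_lt hμ hν (ε := a ^ 2 - W2sq μ ν)
    (by rw [← W2_sq]; nlinarith)
  obtain ⟨π', hπ', hπlt'⟩ := exists_coupling_lt hν hξ (ε := b ^ 2 - W2sq ν ξ)
    (by rw [← W2_sq]; nlinarith)
  have := hπ.1
  obtain ⟨τ, hτ, hτ1, hτ2⟩ := exists_glue π measurable_snd hπ.2.2 hπ'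
  have lX : τ.map (fun q => q.1.1) = μ := by
    rw [← hπ.2.1, ← hτ1, Measure.map_map measurable_fst measurable_fst]; rfl
  have lZ : τ.map (fun q => q.1.2) = ν := by
    rw [← hπ.2.2, ← hτ1, Measure.map_map measurable_snd measurable_fst]; rfl
  have lY : τ.map (fun q => q.2) = ξ := by
    rw [← hπ'.2.2, ← hτ2, Measure.map_map measurable_snd (by fun_prop)]; rfl
  rw [← hτ1, integral_map (by fun_prop) (by fun_prop)] at hπlt
  rw [← hτ2, integral_map (by fun_prop) (by fun_prop)] at hπlt'
  have iX := hμ.integrable_sq (by fun_prop) lX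
  have iZ := hν.integrable_sq (by fun_prop) lZ
  have iY := hξ.integrable_sq (by fun_prop) lY
  have iXZ := (integrable_sub_sq (by fun_prop) (by fun_prop) iX iZ).const_mul (1 + b / a)
  have iZY := (integrable_sub_sq (by fun_prop) (by fun_prop) iZ iY).const_mul (1 + a / b)
  have key : W2sq μ ξ ≤ (a + b) ^ 2 := by
    calc W2sq μ ξ ≤ ∫ q, ‖q.1.1 - q.2‖ ^ 2 ∂τ :=
          W2sq_le_integral τ (by fun_prop) (by fun_prop) lX lY
      _ ≤ ∫ q, ((1 + b / a) * ‖q.1.1 - q.1.2‖ ^ 2 + (1 + a / b) * ‖q.1.2 - q.2‖ ^ 2) ∂τ := by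
          refine integral_mono (integrable_sub_sq (by fun_prop) (by fun_prop) iX iY)
            (iXZ.add iZY) fun q => ?_
          have h1 := norm_sub_le_norm_sub_add_norm_sub q.1.1 q.1.2 q.2
          have h2 : ‖q.1.1 - q.2‖ ^ 2 ≤ (‖q.1.1 - q.1.2‖ + ‖q.1.2 - q.2‖) ^ 2 := by gcongr
          refine h2.trans ?_
          generalize ‖q.1.1 - q.1.2‖ = u
          generalize ‖q.1.2 - q.2‖ = v
          -- Young's inequality with weight `b / a`.
          have : (1 + b / a) * u ^ 2 + (1 + a / b) * v ^ 2 - (u + v) ^ 2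
              = (b * u - a * v) ^ 2 / (a * b) := by field_simp; ring
          have : 0 ≤ (b * u - a * v) ^ 2 / (a * b) := by positivity
          linarith
      _ = (1 + b / a) * ∫ q, ‖q.1.1 - q.1.2‖ ^ 2 ∂τ + (1 + a / b) * ∫ q, ‖q.1.2 - q.2‖ ^ 2 ∂τ := by
          rw [integral_add iXZ iZY, integral_const_mul, integral_const_mul]
      _ ≤ (1 + b / a) * a ^ 2 + (1 + a / b) * b ^ 2 := by
          gcongr <;> linarith
      _ = (a + b) ^ 2 := by field_simp; ring
  rw [W2]
  refine (Real.sqrt_le_sqrt key).trans ?_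
  rw [Real.sqrt_sq (by positivity)]
  linarith

/-- Quadratic growth of the extrapolation functional at a minimizer, with denominators cleared:
both sides are multiplied by `2t(t-1)`. -/
lemma IsMetricExtrap.growth {t : ℝ} (ht : 1 < t) {ν₀ ν₁ ρ σ : Measure (EuclideanSpace ℝ (Fin d))}
    (hρ : IsMetricExtrap t ν₀ ν₁ ρ) (hν₀ : IsP2 ν₀) (hν₁ : IsP2 ν₁) (hσ : IsP2 σ) :
    W2sq ρ σ ≤ t * (W2sq σ ν₁ - W2sq ρ ν₁) - (t - 1) * (W2sq σ ν₀ - W2sq ρ ν₀) := by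
  have hmin : ∀ η, IsP2 η →
      t * W2sq ρ ν₁ - (t - 1) * W2sq ρ ν₀ ≤ t * W2sq η ν₁ - (t - 1) * W2sq η ν₀ := by
    intro η hη
    have h := hρ.2 η hη
    have ht1 : 0 < t - 1 := by linarith
    have e : ∀ x y : ℝ, x / (2 * (t - 1)) - y / (2 * t) =
        (t * x - (t - 1) * y) / (2 * t * (t - 1)) := by
      intro x y
      field_simp
    rw [e, e] at h
    exact (div_le_div_iff_of_pos_right (by positivity)).1 h
  -- Minimality against the interpolation at time `s`, after dividing by `s`.
  have hs : ∀ s : ℝ, 0 < s → s < 1 → (1 - s) * W2sq ρ σ ≤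
      t * (W2sq σ ν₁ - W2sq ρ ν₁) - (t - 1) * (W2sq σ ν₀ - W2sq ρ ν₀) := by
    intro s hs0 hs1
    have h : s * ((1 - s) * W2sq ρ σ) ≤
        s * (t * (W2sq σ ν₁ - W2sq ρ ν₁) - (t - 1) * (W2sq σ ν₀ - W2sq ρ ν₀)) := by
      refine le_of_forall_pos_le_add fun δ hδ => ?_
      obtain ⟨C, η, hC, hη, h1, h0⟩ := exists_interpolation hρ.1 hσ hν₁ hs0.le hs1.le
        (ε := δ / t) (by positivity)
      have m := hmin η hη
      have h1' := mul_le_mul_of_nonneg_left h1 (by linarith : 0 ≤ t)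
      have h0' := mul_le_mul_of_nonneg_left (h0 ν₀ hν₀) (by linarith : 0 ≤ t - 1)
      have hC' := mul_le_mul_of_nonneg_left hC (by nlinarith : 0 ≤ s * (1 - s))
      have ed : t * (δ / t) = δ := by field_simp
      nlinarith
    exact le_of_mul_le_mul_left h hs0
  refine le_of_forall_pos_le_add fun δ hδ => ?_
  have hw := W2sq_nonneg ρ σ
  -- The choice of `s` makes `s * W2sq ρ σ ≤ δ`.
  have h := hs (δ / (W2sq ρ σ + δ + 1)) (by positivity)
    (by rw [div_lt_one (by positivity)]; linarith)
  have : δ / (W2sq ρ σ + δ + 1) * W2sq ρ σ ≤ δ := by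
    rw [div_mul_eq_mul_div, div_le_iff₀ (by positivity)]
    nlinarith
  linarith

/-- An extrapolation lies no further from `ν₁` than the endpoint of an extended geodesic would. -/
lemma IsMetricExtrap.W2_le {t : ℝ} (ht : 1 < t) {ν₀ ν₁ ρ : Measure (EuclideanSpace ℝ (Fin d))}
    (hρ : IsMetricExtrap t ν₀ ν₁ ρ) (hν₀ : IsP2 ν₀) (hν₁ : IsP2 ν₁) :
    W2 ρ ν₁ ≤ (t - 1) * W2 ν₁ ν₀ := by
  have h := hρ.growth ht hν₀ hν₁ hν₁
  have tri := W2_triangle hρ.1 hν₁ hν₀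
  rw [W2sq_self hν₁, ← W2_sq, ← W2_sq, ← W2_sq] at h
  have a0 := W2_nonneg ρ ν₁
  have b0 := W2_nonneg ρ ν₀
  have c0 := W2_nonneg ν₁ ν₀
  generalize W2 ρ ν₁ = a at *
  generalize W2 ρ ν₀ = b at *
  generalize W2 ν₁ ν₀ = c at *
  have hb : b ^ 2 ≤ (a + c) ^ 2 := by gcongr
  have h2 := mul_le_mul_of_nonneg_left hb (by linarith : 0 ≤ t - 1)
  rcases a0.eq_or_lt with rfl | ha
  · exact mul_nonneg (by linarith) c0
  · refine le_of_mul_le_mul_left ?_ ha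
    nlinarith

lemma W2sq_sub_le {μ ν ξ : Measure (EuclideanSpace ℝ (Fin d))} (hμ : IsP2 μ) (hν : IsP2 ν)
    (hξ : IsP2 ξ) : W2sq μ ξ - W2sq μ ν ≤ (W2 μ ξ + W2 μ ν) * W2 ν ξ := by
  have h := W2_triangle hμ hν hξ
  rw [← W2_sq, ← W2_sq]
  nlinarith [W2_nonneg μ ξ, W2_nonneg μ ν]

end Helpers


/-- Hölder stability of the metric extrapolation in its first argument. -/
theorem stmt12 {d : ℕ} (hd : 1 ≤ d) (t : ℝ) (ht : 1 < t)
    (ν₀ ν₀' ν₁ ρ ρ' : Measure (EuclideanSpace ℝ (Fin d)))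
    (hν₀ : IsP2 ν₀) (hν₀' : IsP2 ν₀') (hν₁ : IsP2 ν₁)
    (hρ : IsMetricExtrap t ν₀ ν₁ ρ) (hρ' : IsMetricExtrap t ν₀' ν₁ ρ') :
    W2 ρ ρ' ^ 2 ≤ t * (t - 1) * (W2 ν₁ ν₀ + W2 ν₁ ν₀') * W2 ν₀ ν₀' := by
  have g := hρ.growth ht hν₀ hν₁ hρ'.1
  have g' := hρ'.growth ht hν₀' hν₁ hρ.1
  have e : W2sq ρ' ρ = W2sq ρ ρ' :=
    le_antisymm (W2sq_comm_le hρ'.1 hρ.1) (W2sq_comm_le hρ.1 hρ'.1)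
  rw [e] at g'
  have d1 := W2sq_sub_le hρ'.1 hν₀ hν₀'
  have d2 := W2sq_sub_le hρ.1 hν₀' hν₀
  rw [W2_comm hν₀' hν₀] at d2
  have a := hρ.W2_le ht hν₀ hν₁
  have a' := hρ'.W2_le ht hν₀' hν₁
  have s1 := W2_triangle hρ.1 hν₁ hν₀
  have s2 := W2_triangle hρ.1 hν₁ hν₀'
  have s3 := W2_triangle hρ'.1 hν₁ hν₀
  have s4 := W2_triangle hρ'.1 hν₁ hν₀'
  have hsum : (W2 ρ' ν₀' + W2 ρ' ν₀) + (W2 ρ ν₀ + W2 ρ ν₀') ≤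
      2 * t * (W2 ν₁ ν₀ + W2 ν₁ ν₀') := by linarith
  have hsum' := mul_le_mul_of_nonneg_right hsum (W2_nonneg ν₀ ν₀')
  have hfin := mul_le_mul_of_nonneg_left (add_le_add d1 d2) (by linarith : 0 ≤ t - 1)
  have hfin' := mul_le_mul_of_nonneg_left hsum' (by linarith : 0 ≤ t - 1)
  rw [W2_sq]
  linarith

end
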